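/- (Lemma 1, ownership soundness) Consider a verification methodology M whose proof obligations guarantee, for every heap-update step of every program trace: (a) freshly allocated objects are open; (b) whenever x.owner is updated or x.closed is set to False, the object x is free; (c) whenever x.closed is set to True, every object o in x.owns is closed and satisfies o.owner = x; (d) whenever any attribute x.a with a ∉ {closed, owner} is updated, the object x is open. Then every heap occurring in a program trace of a program satisfying M's proof obligations satisfies the ownership-consistency property G2: for all objects o and p, if p is closed and o ∈ p.owns then o is closed and o.owner = p. -/

import Mathlib

/-!
G2 holds initially because the only allocated object is open, and every step preserves it.
Suppose `p` is closed and `o ∈ p.owns` after a step. A freshly allocated object is open and not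
referenced, and an object whose `owns` or data changes is open, so neither can be `p`. If `o` is
opened or changes owner, it was free before the step, whereas by G2 its owner was the closed object
`p`. If `p` is the object being closed, the obligation for closing is exactly the claim.
-/

/-- A heap records the set of allocated objects (with `Void` allocated) and assigns
to each object a Boolean `closed` flag, an `owner`, a set `owns` of owned objects,
and values of other attributes. -/
structure Heap (Obj Attr Val : Type) where
  alloc : Set Obj
  closed : Obj → Bool
  owner : Obj → Obj
  owns : Obj → Set Obj
  data : Obj → Attr → Val

namespace Heap

variable {Obj Attr Val : Type}

/-- Ownership consistency G2: for all allocated objects `o`, `p`, if `p` is closed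
and `o ∈ p.owns` then `o` is closed and `o.owner = p`. -/
def G2 (h : Heap Obj Attr Val) : Prop :=
  ∀ o p, o ∈ h.alloc → p ∈ h.alloc → h.closed p = true → o ∈ h.owns p →
    h.closed o = true ∧ h.owner o = p

/-- Allocation of a fresh (previously unallocated, hence unreferenced) object `x`,
which by rule (a) is open afterwards; attributes of previously allocated objects
are unchanged. -/
def MAllocStep (h h' : Heap Obj Attr Val) : Prop :=
  ∃ x, x ∉ h.alloc ∧ h'.alloc = h.alloc ∪ {x} ∧
    (∀ p, p ∈ h.alloc → x ∉ h.owns p) ∧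
    -- rule (a): freshly allocated objects are open
    h'.closed x = false ∧
    (∀ o, o ≠ x → h'.closed o = h.closed o ∧ h'.owner o = h.owner o ∧
      h'.owns o = h.owns o ∧ h'.data o = h.data o)

/-- Update `x.closed := b` of one allocated object `x`, changing nothing else;
by rule (b), if `b = false` then `x` is free in the pre-state; by rule (c), if
`b = true` then every `o ∈ x.owns` is closed with `o.owner = x` in the pre-state. -/
def MUpdClosedStep (h h' : Heap Obj Attr Val) : Prop :=
  ∃ x b, x ∈ h.alloc ∧ h'.alloc = h.alloc ∧
    h'.closed x = b ∧ (∀ o, o ≠ x → h'.closed o = h.closed o) ∧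
    h'.owner = h.owner ∧ h'.owns = h.owns ∧ h'.data = h.data ∧
    -- rule (b): whenever `x.closed` is set to `false`, `x` is free
    (b = false → h.closed (h.owner x) = false) ∧
    -- rule (c): whenever `x.closed` is set to `true`, owned objects are closed
    -- and point back to `x`
    (b = true → ∀ o ∈ h.owns x, h.closed o = true ∧ h.owner o = x)

/-- Update `x.owner := y` of one allocated object `x`, changing nothing else;
by rule (b), `x` is free in the pre-state. -/
def MUpdOwnerStep (h h' : Heap Obj Attr Val) : Prop :=
  ∃ x y, x ∈ h.alloc ∧ h'.alloc = h.alloc ∧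
    h'.owner x = y ∧ (∀ o, o ≠ x → h'.owner o = h.owner o) ∧
    h'.closed = h.closed ∧ h'.owns = h.owns ∧ h'.data = h.data ∧
    -- rule (b): `x` is free
    h.closed (h.owner x) = false

/-- Update `x.owns := s` of one allocated object `x`, changing nothing else;
by rule (d), `x` is open in the pre-state. -/
def MUpdOwnsStep (h h' : Heap Obj Attr Val) : Prop :=
  ∃ x s, x ∈ h.alloc ∧ h'.alloc = h.alloc ∧
    h'.owns x = s ∧ (∀ o, o ≠ x → h'.owns o = h.owns o) ∧
    h'.closed = h.closed ∧ h'.owner = h.owner ∧ h'.data = h.data ∧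
    -- rule (d): `x` is open
    h.closed x = false

/-- Update `x.a := v` of one other attribute `a ∉ {closed, owner}` of one allocated
object `x`, changing nothing else; by rule (d), `x` is open in the pre-state. -/
def MUpdDataStep (h h' : Heap Obj Attr Val) : Prop :=
  ∃ x a v, x ∈ h.alloc ∧ h'.alloc = h.alloc ∧
    h'.data x a = v ∧ (∀ o b, ¬ (o = x ∧ b = a) → h'.data o b = h.data o b) ∧
    h'.closed = h.closed ∧ h'.owner = h.owner ∧ h'.owns = h.owns ∧
    -- rule (d): `x` is open
    h.closed x = false

/-- A heap-update step of a program verified under methodology `M`: one instruction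
(allocation or a single-attribute update) satisfying `M`'s proof obligations
(a)–(d). -/
def MStep (h h' : Heap Obj Attr Val) : Prop :=
  MAllocStep h h' ∨ MUpdClosedStep h h' ∨ MUpdOwnerStep h h' ∨
    MUpdOwnsStep h h' ∨ MUpdDataStep h h'

end Heap

namespace Heap

variable {Obj Attr Val : Type}

theorem MAllocStep.g2 {h h' : Heap Obj Attr Val} (hs : MAllocStep h h') (hG : G2 h) : G2 h' := by
  obtain ⟨x, -, halloc, hunref, hopen, hrest⟩ := hs
  intro o p ho hp hcp hop
  have hpx : p ≠ x := by rintro rfl; simp [hopen] at hcp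
  have hp' : p ∈ h.alloc := by simpa [halloc, hpx] using hp
  obtain ⟨hc, -, hw, -⟩ := hrest p hpx
  rw [hc] at hcp
  rw [hw] at hop
  have hox : o ≠ x := by rintro rfl; exact hunref p hp' hop
  have ho' : o ∈ h.alloc := by simpa [halloc, hox] using ho
  obtain ⟨hc', hw', -, -⟩ := hrest o hox
  rw [hc', hw']
  exact hG o p ho' hp' hcp hop

theorem MUpdClosedStep.g2 {h h' : Heap Obj Attr Val} (hs : MUpdClosedStep h h') (hG : G2 h) :
    G2 h' := by
  obtain ⟨x, b, -, halloc, hx, hrest, howner, howns, -, hb, hc⟩ := hs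
  intro o p ho hp hcp hop
  rw [halloc] at ho hp
  rw [howns] at hop
  rw [howner]
  have hpre : h.closed o = true ∧ h.owner o = p := by
    by_cases hpx : p = x
    · subst hpx
      exact hc (hx.symm.trans hcp) o hop
    · exact hG o p ho hp (hrest p hpx ▸ hcp) hop
  refine ⟨?_, hpre.2⟩
  by_cases hox : o = x
  · subst hox
    rw [hx]
    by_contra hbt
    have hbf : b = false := by simpa using hbt
    -- `o` was free when opened, so its owner `p` was open; hence `p` is not closed afterwards either.
    have hpo : h.closed p = false := hpre.2 ▸ hb hbf
    by_cases hpx : p = o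
    · subst hpx
      simp [hx, hbf] at hcp
    · rw [hrest p hpx, hpo] at hcp
      simp at hcp
  · rw [hrest o hox]
    exact hpre.1

theorem MUpdOwnerStep.g2 {h h' : Heap Obj Attr Val} (hs : MUpdOwnerStep h h') (hG : G2 h) :
    G2 h' := by
  obtain ⟨x, y, -, halloc, -, hrest, hclosed, howns, -, hfree⟩ := hs
  intro o p ho hp hcp hop
  rw [halloc] at ho hp
  rw [howns] at hop
  rw [hclosed] at hcp ⊢
  obtain ⟨hco, hoo⟩ := hG o p ho hp hcp hop
  have hox : o ≠ x := by
    rintro rfl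
    rw [hoo, hcp] at hfree
    simp at hfree
  exact ⟨hco, (hrest o hox).trans hoo⟩

theorem MUpdOwnsStep.g2 {h h' : Heap Obj Attr Val} (hs : MUpdOwnsStep h h') (hG : G2 h) :
    G2 h' := by
  obtain ⟨x, s, -, halloc, -, hrest, hclosed, howner, -, hopen⟩ := hs
  intro o p ho hp hcp hop
  rw [halloc] at ho hp
  rw [hclosed] at hcp ⊢
  rw [howner]
  have hpx : p ≠ x := by
    rintro rfl
    simp [hopen] at hcp
  exact hG o p ho hp hcp (hrest p hpx ▸ hop)

theorem MUpdDataStep.g2 {h h' : Heap Obj Attr Val} (hs : MUpdDataStep h h') (hG : G2 h) :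
    G2 h' := by
  obtain ⟨x, a, v, -, halloc, -, -, hclosed, howner, howns, -⟩ := hs
  unfold G2
  rw [halloc, hclosed, howner, howns]
  exact hG

theorem MStep.g2 {h h' : Heap Obj Attr Val} (hs : MStep h h') (hG : G2 h) : G2 h' := by
  rcases hs with hs | hs | hs | hs | hs
  exacts [hs.g2 hG, hs.g2 hG, hs.g2 hG, hs.g2 hG, hs.g2 hG]

end Heap

/-- (Lemma 1, ownership soundness) Every heap occurring in a program trace of a
program satisfying methodology `M`'s proof obligations (a)–(d) satisfies the
ownership-consistency property G2. A trace starts in the initial heap, where no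
object is allocated except `Void` and `Void` is open, and each consecutive pair of
heaps differs by exactly one heap-update instruction satisfying the obligations. -/
theorem lemma1_ownership_soundness {Obj Attr Val : Type} (Void : Obj)
    (tr : ℕ → Heap Obj Attr Val) (n : ℕ)
    (hinit_alloc : (tr 0).alloc = {Void})
    (hinit_open : (tr 0).closed Void = false)
    (hstep : ∀ i, i < n → Heap.MStep (tr i) (tr (i + 1))) :
    ∀ i, i ≤ n → Heap.G2 (tr i) := by
  intro i
  induction i with
  | zero =>
    intro _ o p _ hp hcp _
    rw [hinit_alloc, Set.mem_singleton_iff] at hp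
    rw [hp, hinit_open] at hcp
    simp at hcp
  | succ k ih => exact fun hk => (hstep k hk).g2 (ih (by omega))
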